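/- arXiv:1309.5618 — 2 statements merged into one kernel-verified Lean document; each statement's English description precedes it below -/
import Mathlib

section
/- Let T be a string of length n, 1 ≤ i ≤ j ≤ n, and let T[μ..j] be the maximal suffix of T[i..j]. Let ℓ be an index with i ≤ ℓ ≤ μ. Let p_1 ∈ [μ, j] be such that P_1 = T[p_1..j] is a prefix of T[μ..j], with ℓ ≤ p_1 − 1, and let p_2 be the starting position of the maximal suffix in Suf[ℓ, p_1 − 1]; set P_2 = T[p_2..j]. If P_1 is not a prefix of P_2, then μ = p_1. Otherwise, P_2 is also a prefix of T[μ..j] and |P_2| > |P_1|. -/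
/-!
Write `M = T[μ..j]`. Truncation to the first `k` letters is weakly monotone for the lexicographic
order (`lex_of_lex_take`). If `μ < p₁`, then `μ` competes with `p₂` in `Suf[ℓ, p₁ - 1]`, so
`T[p₂..]` is at least `T[μ..]`, while maximality of `M` makes `M` at least `P₂`. Truncating both
inequalities to `k ≤ min |M| |P₂|` letters shows that `M` and `P₂` share their first `k` letters.

Taking `k = |P₁|` gives that `P₁` is a prefix of `P₂`, which is the first claim by contraposition.
For the second claim, `M` is never a proper prefix of `P₂`, as `P₂` would then be a larger suffix
of `T[i..j]`. This rules out `μ = p₁` (where `M = P₁`) and, with `k = |M|`, also `p₂ < μ`; in the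
remaining case `k = |P₂|` shows that `P₂` is a prefix of `M`.
-/


variable {α : Type*} [LinearOrder α]

/-- `substr T i j` is the 1-indexed substring `T[i..j]` (inclusive). -/
def substr (T : List α) (i j : ℕ) : List α := (T.drop (i - 1)).take (j - i + 1)

/-- `sufFrom T i` is the 1-indexed suffix `T[i..]`. -/
def sufFrom (T : List α) (i : ℕ) : List α := T.drop (i - 1)

/-- `s` is the lexicographically maximal nonempty suffix of `w`. -/
def IsMaxSuffix (w s : List α) : Prop :=
  s ≠ [] ∧ s <:+ w ∧ ∀ t, t ≠ [] → t <:+ w → ¬ List.Lex (· < ·) s t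

/-- A strict comparison of truncations is decided within the truncations. -/
lemma lex_of_lex_take : ∀ (k : ℕ) (a b : List α),
    List.Lex (· < ·) (a.take k) (b.take k) → List.Lex (· < ·) a b
  | 0, a, b, h => by simp at h
  | k + 1, [], [], h => by simp at h
  | k + 1, [], y :: b, _ => List.Lex.nil
  | k + 1, x :: a, [], h => by simp at h
  | k + 1, x :: a, y :: b, h => by
    simp only [List.take_succ_cons] at h
    cases h with
    | cons h => exact List.Lex.cons (lex_of_lex_take k a b h)
    | rel h => exact List.Lex.rel h

lemma eq_of_not_lex {a b : List α} (h₁ : ¬ List.Lex (· < ·) a b)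
    (h₂ : ¬ List.Lex (· < ·) b a) : a = b :=
  le_antisymm (not_lt.mp (show ¬ b < a from h₂)) (not_lt.mp (show ¬ a < b from h₁))

lemma lex_of_prefix_of_length_lt {a b : List α} (h : a <+: b) (hl : a.length < b.length) :
    List.Lex (· < ·) a b := by
  obtain ⟨c, rfl⟩ := h
  induction a with
  | nil =>
    cases c with
    | nil => simp at hl
    | cons y c => exact List.Lex.nil
  | cons x a ih => exact List.Lex.cons (ih (by simp at hl ⊢; omega))

lemma length_substr (T : List α) {p j : ℕ} (hp : 1 ≤ p) (hpj : p ≤ j) (hj : j ≤ T.length) :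
    (substr T p j).length = j - p + 1 := by
  simp only [substr, List.length_take, List.length_drop]
  omega

lemma substr_suffix (T : List α) {i p j : ℕ} (hi : 1 ≤ i) (hip : i ≤ p) (hpj : p ≤ j) :
    substr T p j <:+ substr T i j := by
  have h : substr T p j = (substr T i j).drop (p - i) := by
    simp only [substr, List.drop_take, List.drop_drop]
    congr 1
    · omega
    · congr 1
      omega
  rw [h]
  exact List.drop_suffix _ _

lemma take_substr (T : List α) {p j k : ℕ} (hk : k ≤ j - p + 1) :
    (substr T p j).take k = (sufFrom T p).take k := by
  simp only [substr, sufFrom, List.take_take, min_eq_left hk]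

/-- Let `T` be a string of length `n`, `1 ≤ i ≤ j ≤ n`, and let `T[μ..j]` be the maximal suffix
of `T[i..j]`.  Let `i ≤ ℓ ≤ μ`, let `p₁ ∈ [μ, j]` be such that `P₁ = T[p₁..j]` is a prefix of
`T[μ..j]` and `ℓ ≤ p₁ - 1`, and let `p₂` be the starting position of the maximal suffix in
`Suf[ℓ, p₁-1]`; set `P₂ = T[p₂..j]`.  If `P₁` is not a prefix of `P₂`, then `μ = p₁`.
Otherwise `P₂` is also a prefix of `T[μ..j]` and `|P₂| > |P₁|`. -/
theorem stmt_7 (T : List α) (i j μ ℓ p₁ p₂ : ℕ)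
    (hi : 1 ≤ i) (hij : i ≤ j) (hj : j ≤ T.length)
    (hμ1 : i ≤ μ) (hμ2 : μ ≤ j)
    (hμmax : IsMaxSuffix (substr T i j) (substr T μ j))
    (hℓ1 : i ≤ ℓ) (hℓ2 : ℓ ≤ μ)
    (hp11 : μ ≤ p₁) (hp12 : p₁ ≤ j)
    (hP1 : substr T p₁ j <+: substr T μ j)
    (hℓp1 : ℓ ≤ p₁ - 1)
    (hp21 : ℓ ≤ p₂) (hp22 : p₂ ≤ p₁ - 1)
    (hp2max : ∀ q, ℓ ≤ q → q ≤ p₁ - 1 →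
      ¬ List.Lex (· < ·) (sufFrom T p₂) (sufFrom T q)) :
    (¬ substr T p₁ j <+: substr T p₂ j → μ = p₁) ∧
    (substr T p₁ j <+: substr T p₂ j →
      substr T p₂ j <+: substr T μ j ∧
      (substr T p₁ j).length < (substr T p₂ j).length) := by
  have hlen₁ := length_substr T (by omega) hp12 hj
  have hlen₂ := length_substr T (p := p₂) (by omega) (by omega) hj
  have hlenμ := length_substr T (by omega) hμ2 hj
  have hM : ¬ List.Lex (· < ·) (substr T μ j) (substr T p₂ j) := by
    refine hμmax.2.2 _ ?_ (substr_suffix T hi (by omega) (by omega))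
    intro h
    rw [h] at hlen₂
    simp at hlen₂
  -- If `μ < p₁`, then `M` and `P₂` agree on as many letters as both have.
  have key : μ ≤ p₁ - 1 → ∀ k, k ≤ j - μ + 1 → k ≤ j - p₂ + 1 →
      (substr T μ j).take k = (substr T p₂ j).take k := by
    intro hμp k hk hk'
    refine eq_of_not_lex (fun h => hM (lex_of_lex_take k _ _ h)) fun h => ?_
    rw [take_substr T hk, take_substr T hk'] at h
    exact hp2max μ hℓ2 hμp (lex_of_lex_take k _ _ h)
  constructor
  · intro hnp
    by_contra hne
    apply hnp
    have h := key (by omega) (j - p₁ + 1) (by omega) (by omega)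
    rw [List.prefix_iff_eq_take, hlen₁] at hP1
    rw [hP1, h]
    exact List.take_prefix _ _
  · intro hp
    refine ⟨?_, by omega⟩
    rcases Nat.lt_or_ge μ p₁ with hlt | hge
    · rcases Nat.lt_or_ge p₂ μ with hlt₂ | hge₂
      · have h := key (by omega) (j - μ + 1) le_rfl (by omega)
        rw [List.take_of_length_le hlenμ.le] at h
        exact absurd (lex_of_prefix_of_length_lt (h ▸ List.take_prefix _ _) (by omega)) hM
      · have h := key (by omega) (j - p₂ + 1) (by omega) le_rfl
        rw [List.take_of_length_le hlen₂.le] at h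
        rw [← h]
        exact List.take_prefix _ _
    · obtain rfl : μ = p₁ := by omega
      exact absurd (lex_of_prefix_of_length_lt hp (by omega)) hM
end

section
/- Let x be a nonempty string and y a string having x as a prefix. Let y' denote y with its first |x| letters removed. Then the largest integer α such that x^α is a prefix of y equals 1 + ⌊lcp(y, y') / |x|⌋. -/
/-!
Write `y = x ++ y'`. A common prefix of `y` and `y'` is the same as a prefix of `y` of length at
most `lcp y y'` (`prefix_iff_length_le_lcp`). Since `x^(k+1)` is a prefix of `x ++ y'` iff `x^k` is
a prefix of `y'`, an induction on `k` shows that `x^(k+1)` is a prefix of `y` iff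
`k * |x| ≤ lcp y y'` (`lrep_succ_prefix_iff`), and the largest such `k` is `⌊lcp y y' / |x|⌋`.
-/

variable {α : Type*} [LinearOrder α]

/-- `lrep w a` is `w^a`, the concatenation of `a` copies of `w`. -/
def lrep (w : List α) (a : ℕ) : List α := (List.replicate a w).flatten

/-- `lcp u v` is the length of the longest common prefix of `u` and `v`. -/
def lcp : List α → List α → ℕ
  | a :: as, b :: bs => if a = b then lcp as bs + 1 else 0
  | _, _ => 0

/-- A prefix of `u` is also a prefix of `v` exactly when it fits inside their
longest common prefix. This is the only property of `lcp` used below. -/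
lemma prefix_iff_length_le_lcp (p u v : List α) (h : p <+: u) :
    p <+: v ↔ p.length ≤ lcp u v := by
  induction p generalizing u v with
  | nil => simp
  | cons a p ih =>
    cases u with
    | nil => simp at h
    | cons b u =>
      obtain ⟨rfl, hu⟩ := List.cons_prefix_cons.mp h
      cases v with
      | nil => simp [lcp]
      | cons c v =>
        rw [List.cons_prefix_cons, ih u v hu, lcp]
        split_ifs with hc <;> simp [hc]

lemma lrep_succ (w : List α) (k : ℕ) : lrep w (k + 1) = w ++ lrep w k := by
  simp [lrep, List.replicate_succ]

lemma lrep_succ_right (w : List α) (k : ℕ) : lrep w (k + 1) = lrep w k ++ w := by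
  simp [lrep, List.replicate_succ']

lemma length_lrep (w : List α) (k : ℕ) : (lrep w k).length = k * w.length := by
  simp [lrep]

/-- Here `z` is the string `y'` that remains of `y = x ++ z`. -/
lemma lrep_succ_prefix_iff (x z : List α) (k : ℕ) :
    lrep x (k + 1) <+: x ++ z ↔ k * x.length ≤ lcp (x ++ z) z := by
  constructor
  · intro h
    have hy : lrep x k <+: x ++ z :=
      List.IsPrefix.trans ⟨x, (lrep_succ_right x k).symm⟩ h
    rw [lrep_succ, List.prefix_append_right_inj] at h
    rwa [prefix_iff_length_le_lcp _ _ _ hy, length_lrep] at h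
  · induction k with
    | zero => intro _; simp [lrep]
    | succ k ih =>
      intro h
      have hy := ih (le_trans (Nat.mul_le_mul_right _ (Nat.le_succ k)) h)
      rw [lrep_succ, List.prefix_append_right_inj, prefix_iff_length_le_lcp _ _ _ hy, length_lrep]
      exact h

/-- Let `x` be nonempty, `x` a prefix of `y`, and let `y'` be `y` with its first `|x|` letters
removed.  Then the largest integer `A` such that `x^A` is a prefix of `y` equals
`1 + ⌊lcp(y, y') / |x|⌋`. -/
theorem stmt_15 (x y : List α) (A : ℕ)
    (hx : x ≠ []) (hpre : x <+: y)
    (hA1 : lrep x A <+: y)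
    (hA2 : ∀ β, lrep x β <+: y → β ≤ A) :
    A = 1 + lcp y (y.drop x.length) / x.length := by
  have hpos : 0 < x.length := List.length_pos_iff.mpr hx
  obtain ⟨z, rfl⟩ := hpre
  rw [List.drop_left]
  -- `A` is positive because `x^1 = x` is a prefix of `y`.
  have h1 : 1 ≤ A := hA2 1 (by simp [lrep])
  obtain ⟨k, rfl⟩ := Nat.exists_eq_add_of_le' h1
  rw [lrep_succ_prefix_iff, ← Nat.le_div_iff_mul_le hpos] at hA1
  have hmax := hA2 (lcp (x ++ z) z / x.length + 1)
    ((lrep_succ_prefix_iff x z _).mpr (Nat.div_mul_le_self _ _))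
  omega
end
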